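/- Let f ∈ L¹[0,1] and γ > 0. Then: (a) the semi-discrete L¹-Potts functionals Q_γ^k Γ-converge to P_γ in L¹[0,1]; (b) each Q_γ^k attains its infimum, i.e., has a minimizer in L¹[0,1]; (c) every sequence (u_k), where u_k is a minimizer of Q_γ^k, has at least one accumulation point in L¹[0,1], and every such accumulation point u satisfies P_γ(u) = inf_{v ∈ L¹[0,1]} P_γ(v). -/

import Mathlib

open MeasureTheory Filter Set
open scoped ENNReal Classical

noncomputable section

/-- The Lebesgue measure restricted to `[0,1]`. -/
def mu01 : Measure ℝ := volume.restrict (Set.Icc (0:ℝ) 1)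

/-- The step function determined by partition points `x` and values `a`. -/
def stepF {m : ℕ} (x : Fin (m + 1) → ℝ) (a : Fin m → ℝ) : ℝ → ℝ := fun t =>
  ∑ l : Fin m, Set.indicator (Set.Ioo (x l.castSucc) (x l.succ)) (fun _ => a l) t

/-- `u` is a.e. on `[0,1]` represented by the step function with partition `x` and values `a`. -/
def IsPCRep (u : ℝ → ℝ) {m : ℕ} (x : Fin (m + 1) → ℝ) (a : Fin m → ℝ) : Prop :=
  StrictMono x ∧ x 0 = 0 ∧ x (Fin.last m) = 1 ∧ ∀ᵐ t ∂mu01, u t = stepF x a t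

/-- `u` is piecewise constant on `[0,1]` (up to a.e. equality). -/
def IsPC (u : ℝ → ℝ) : Prop :=
  ∃ (m : ℕ) (x : Fin (m + 1) → ℝ) (a : Fin m → ℝ), IsPCRep u x a

/-- The number of jumps `J(u)`: the minimal number of interior partition points over all
piecewise constant representations of `u`. -/
def jumps (u : ℝ → ℝ) : ℕ :=
  sInf {jj : ℕ | ∃ (x : Fin (jj + 2) → ℝ) (a : Fin (jj + 1) → ℝ), IsPCRep u x a}

/-- `u` is piecewise constant with all jump locations inside `S`. -/
def IsPCIn (u : ℝ → ℝ) (S : Set ℝ) : Prop :=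
  ∃ (m : ℕ) (x : Fin (m + 1) → ℝ) (a : Fin m → ℝ), IsPCRep u x a ∧
    ∀ i : Fin (m + 1), i ≠ 0 → i ≠ Fin.last m → x i ∈ S

/-- The `L¹[0,1]` distance of two functions. -/
def L1dist (u v : ℝ → ℝ) : ℝ := ∫ t, |u t - v t| ∂mu01

/-- The continuous `L¹`-Potts functional `P_γ` with data `f`. -/
def Potts (γ : ℝ) (f u : ℝ → ℝ) : ℝ≥0∞ :=
  if IsPC u then ENNReal.ofReal (γ * (jumps u : ℝ) + L1dist u f) else ⊤

/-- The (semi-)discrete `L¹`-Potts functional with data `f`, restricted to piecewise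
constant functions whose jumps lie in `S`. -/
def PottsIn (γ : ℝ) (f : ℝ → ℝ) (S : Set ℝ) (u : ℝ → ℝ) : ℝ≥0∞ :=
  if IsPCIn u S then ENNReal.ofReal (γ * (jumps u : ℝ) + L1dist u f) else ⊤

/-- `u` is a.e. equal to a constant (with respect to `mu01`) on some neighbourhood of `t`. -/
def AEConstAt (u : ℝ → ℝ) (t : ℝ) : Prop :=
  ∃ U ∈ nhds t, ∃ c : ℝ, ∀ᵐ s ∂mu01, s ∈ U → u s = c

/-- The essential jump set of `u`: the points of `(0,1)` near which `u` is not a.e. constant. -/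
def jumpSet (u : ℝ → ℝ) : Set ℝ := {t ∈ Ioo (0:ℝ) 1 | ¬ AEConstAt u t}

instance : IsFiniteMeasure mu01 := by
  unfold mu01; infer_instance

instance : NullSingletonClass mu01 := by
  unfold mu01; infer_instance

lemma mu01_Ioo_pos {a b : ℝ} (h : (Ioo (0:ℝ) 1 ∩ Ioo a b).Nonempty) : 0 < mu01 (Ioo a b) := by
  obtain ⟨t, ⟨h0, h1⟩, h2, h3⟩ := h
  have : 0 < volume (Ioo (max 0 a) (min 1 b)) := by
    rw [Real.volume_Ioo, ENNReal.ofReal_pos, sub_pos]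
    exact lt_trans (max_lt h0 h2) (lt_min h1 h3)
  refine this.trans_le ?_
  rw [mu01, Measure.restrict_apply measurableSet_Ioo]
  refine measure_mono fun s hs => ?_
  simp only [mem_Ioo, max_lt_iff, lt_min_iff, mem_inter_iff, mem_Icc] at hs ⊢
  exact ⟨⟨hs.1.2, hs.2.2⟩, hs.1.1.le, hs.2.1.le⟩

lemma ae_mem_Ioo : ∀ᵐ t ∂mu01, t ∈ Ioo (0:ℝ) 1 := by
  have h : ∀ᵐ t ∂mu01, t ∈ Icc (0:ℝ) 1 := ae_restrict_mem measurableSet_Icc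
  have h0 : ∀ᵐ t ∂mu01, t ≠ 0 := by simp [ae_iff]
  have h1 : ∀ᵐ t ∂mu01, t ≠ 1 := by simp [ae_iff]
  filter_upwards [h, h0, h1] with t ht h0 h1
  exact ⟨lt_of_le_of_ne ht.1 (Ne.symm h0), lt_of_le_of_ne ht.2 h1⟩

lemma ae_notMem_range {m : ℕ} (x : Fin m → ℝ) : ∀ᵐ t ∂mu01, t ∉ range x :=
  (finite_range x).countable.ae_notMem _

lemma stepF_apply {m : ℕ} {x : Fin (m + 1) → ℝ} (hx : Monotone x) (a : Fin m → ℝ) {l : Fin m}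
    {t : ℝ} (ht : t ∈ Ioo (x l.castSucc) (x l.succ)) : stepF x a t = a l := by
  rw [stepF, Finset.sum_eq_single l]
  · exact indicator_of_mem ht _
  · intro j _ hj
    refine indicator_of_notMem (fun h => ?_) _
    rcases lt_or_gt_of_ne hj with h' | h'
    · have : x j.succ ≤ x l.castSucc := hx (by rw [Fin.le_def]; simpa using h')
      linarith [h.2, ht.1]
    · have : x l.succ ≤ x j.castSucc := hx (by rw [Fin.le_def]; simpa using h')
      linarith [h.1, ht.2]
  · simp

lemma exists_mem_Ioo {m : ℕ} {x : Fin (m + 1) → ℝ} {t : ℝ} (h0 : x 0 < t)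
    (h1 : t < x (Fin.last m)) (ht : t ∉ range x) :
    ∃ l : Fin m, t ∈ Ioo (x l.castSucc) (x l.succ) := by
  by_contra! h
  have key : ∀ i, x i < t := by
    intro i
    induction i using Fin.induction with
    | zero => exact h0
    | succ i ih =>
      have := h i
      simp only [mem_Ioo, not_and, not_lt] at this
      exact lt_of_le_of_ne (this ih) fun h' => ht ⟨_, h'⟩
  exact absurd (key _) (not_lt.2 h1.le)

lemma IsPCRep.jumpSet_subset {u : ℝ → ℝ} {n : ℕ} {x : Fin (n + 2) → ℝ} {a : Fin (n + 1) → ℝ}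
    (h : IsPCRep u x a) : jumpSet u ⊆ range fun i : Fin n => x i.castSucc.succ := by
  obtain ⟨hx, h0, h1, hu⟩ := h
  rintro t ⟨⟨ht0, ht1⟩, ht⟩
  by_contra hr
  refine ht ?_
  have hr' : t ∉ range x := by
    rintro ⟨i, rfl⟩
    rcases Fin.eq_zero_or_eq_succ i with rfl | ⟨j, rfl⟩
    · linarith
    · rcases Fin.eq_castSucc_or_eq_last j with ⟨k, rfl⟩ | rfl
      · exact hr ⟨k, rfl⟩
      · rw [Fin.succ_last] at ht1; linarith
  obtain ⟨l, hl⟩ := exists_mem_Ioo (x := x) (by rwa [h0]) (by rwa [h1]) hr'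
  refine ⟨_, Ioo_mem_nhds hl.1 hl.2, a l, ?_⟩
  filter_upwards [hu] with s hs hs'
  rw [hs, stepF_apply hx.monotone a hs']

lemma ae_const_of_aeConstAt {u : ℝ → ℝ} {a b : ℝ} (hab : Ioo a b ⊆ Ioo 0 1)
    (h : ∀ t ∈ Ioo a b, AEConstAt u t) : ∃ c, ∀ᵐ s ∂mu01, s ∈ Ioo a b → u s = c := by
  rcases (Ioo a b).eq_empty_or_nonempty with he | ⟨t₀, ht₀⟩
  · exact ⟨0, by simp [he]⟩
  choose! U hU g hg using h
  have hloc : ∀ t ∈ Ioo a b, ∀ᶠ s in nhds t, s ∈ Ioo a b → g s = g t := by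
    intro t ht
    filter_upwards [eventually_mem_nhds_iff.2 (hU t ht)] with s hs hsab
    obtain ⟨p, q, hpq, hsub⟩ := mem_nhds_iff_exists_Ioo_subset.1 (inter_mem hs (hU s hsab))
    have hpos := mu01_Ioo_pos ⟨s, hab hsab, hpq⟩
    have hfreq : ∃ᶠ r in ae mu01, r ∈ Ioo p q := by
      rw [frequently_ae_mem_iff]; exact hpos.ne'
    obtain ⟨r, hr, h1, h2⟩ := (hfreq.and_eventually ((hg t ht).and (hg s hsab))).exists
    rw [← h1 (hsub hr).1, ← h2 (hsub hr).2]
  have hconst : ∀ t ∈ Ioo a b, g t = g t₀ := by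
    intro t ht
    refine isPreconnected_Ioo.induction₂ (s := Ioo a b) (fun p q => g p = g q) ?_ ?_ ?_ ht ht₀
    · intro p hp
      filter_upwards [nhdsWithin_le_nhds (hloc p hp), self_mem_nhdsWithin] with s hs hs'
      exact (hs hs').symm
    · intro p q r _ _ _ h1 h2; exact h1.trans h2
    · intro p q _ _ h1; exact h1.symm
  refine ⟨g t₀, ?_⟩
  have : mu01 {s | s ∈ Ioo a b ∧ u s ≠ g t₀} = 0 := by
    refine measure_null_of_locally_null _ fun s hs => ?_
    refine ⟨_ , inter_mem_nhdsWithin _ (hU s hs.1), ?_⟩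
    refine measure_mono_null ?_ (hg s hs.1)
    rintro r ⟨⟨hr, hr'⟩, hr2⟩
    simp only [mem_compl_iff, mem_ofPred_eq]
    intro h'
    exact hr' ((h' hr2).trans (hconst s hs.1))
  rw [ae_iff]
  simpa only [Classical.not_imp] using this

/-- A finite subset of `(0,1)`, together with the endpoints, enumerated increasingly. -/
lemma exists_partition {T : Finset ℝ} {n : ℕ} (hn : T.card = n)
    (hT : (T : Set ℝ) ⊆ Ioo 0 1) :
    ∃ x : Fin (n + 2) → ℝ, StrictMono x ∧ x 0 = 0 ∧ x (Fin.last _) = 1 ∧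
      range x = insert 0 (insert 1 (T : Set ℝ)) := by
  have h1 : (1:ℝ) ∉ T := fun h => by simpa using (hT h).2
  have h0 : (0:ℝ) ∉ insert 1 T := by
    simp only [Finset.mem_insert, zero_ne_one, false_or]
    exact fun h => by simpa using (hT h).1
  have hc : (insert 0 (insert 1 T)).card = n + 2 := by
    rw [Finset.card_insert_of_notMem h0, Finset.card_insert_of_notMem h1, hn]
  have hr : range ((insert 0 (insert 1 T)).orderEmbOfFin hc) = insert 0 (insert 1 (T : Set ℝ)) := by
    simp
  have hb : ∀ i, (insert 0 (insert 1 T)).orderEmbOfFin hc i ∈ Icc (0:ℝ) 1 := by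
    intro i
    have := hr.subset ⟨i, rfl⟩
    rcases this with h | h | h
    · rw [h]; simp
    · rw [h]; simp
    · exact Ioo_subset_Icc_self (hT h)
  refine ⟨(insert 0 (insert 1 T)).orderEmbOfFin hc, OrderEmbedding.strictMono _, ?_, ?_, hr⟩
  · obtain ⟨i, hi⟩ := hr.superset (mem_insert 0 _)
    exact le_antisymm (((OrderEmbedding.monotone _) (Fin.zero_le i)).trans hi.le) (hb 0).1
  · obtain ⟨i, hi⟩ := hr.superset (mem_insert_of_mem 0 (mem_insert 1 _))
    exact le_antisymm (hb _).2 (hi.ge.trans ((OrderEmbedding.monotone _) (Fin.le_last i)))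

lemma exists_isPCRep {u : ℝ → ℝ} {n : ℕ} {x : Fin (n + 1) → ℝ} (hx : StrictMono x)
    (h0 : x 0 = 0) (h1 : x (Fin.last n) = 1) (hu : jumpSet u ⊆ range x) :
    ∃ a, IsPCRep u x a := by
  have hb : ∀ i, x i ∈ Icc (0:ℝ) 1 := fun i =>
    ⟨h0 ▸ hx.monotone (Fin.zero_le i), h1 ▸ hx.monotone (Fin.le_last i)⟩
  have : ∀ l : Fin n, ∃ c, ∀ᵐ s ∂mu01, s ∈ Ioo (x l.castSucc) (x l.succ) → u s = c := by
    intro l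
    have hsub : Ioo (x l.castSucc) (x l.succ) ⊆ Ioo 0 1 := fun t ht =>
      ⟨(hb _).1.trans_lt ht.1, ht.2.trans_le (hb _).2⟩
    refine ae_const_of_aeConstAt hsub fun t ht => ?_
    by_contra hc
    obtain ⟨i, rfl⟩ := hu ⟨hsub ht, hc⟩
    have h1 := hx.lt_iff_lt.1 ht.1
    have h2 := hx.lt_iff_lt.1 ht.2
    rw [Fin.lt_def] at h1 h2
    simp at h1 h2
    omega
  choose a ha using this
  refine ⟨a, hx, h0, h1, ?_⟩
  filter_upwards [ae_all_iff.2 ha, ae_mem_Ioo, ae_notMem_range x] with t ht ht1 ht2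
  obtain ⟨l, hl⟩ := exists_mem_Ioo (by rw [h0]; exact ht1.1) (by rw [h1]; exact ht1.2) ht2
  rw [ht l hl, stepF_apply hx.monotone a hl]

lemma IsPCRep.pos {u : ℝ → ℝ} {m : ℕ} {x : Fin (m + 1) → ℝ} {a : Fin m → ℝ}
    (h : IsPCRep u x a) : m ≠ 0 := by
  rintro rfl
  have h0 := h.2.1
  have h1 := h.2.2.1
  have : (Fin.last 0 : Fin (0 + 1)) = 0 := rfl
  rw [this, h0] at h1
  exact zero_ne_one h1

lemma IsPC.finite_jumpSet {u : ℝ → ℝ} (h : IsPC u) : (jumpSet u).Finite := by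
  obtain ⟨m, x, a, h⟩ := h
  obtain ⟨n, rfl⟩ := Nat.exists_eq_succ_of_ne_zero h.pos
  exact (finite_range _).subset h.jumpSet_subset

lemma exists_minimal_rep {u : ℝ → ℝ} (h : (jumpSet u).Finite) :
    ∃ (x : Fin ((jumpSet u).ncard + 2) → ℝ) (a : Fin ((jumpSet u).ncard + 1) → ℝ),
      IsPCRep u x a ∧ ∀ i, i ≠ 0 → i ≠ Fin.last _ → x i ∈ jumpSet u := by
  obtain ⟨x, hx, h0, h1, hr⟩ := exists_partition (ncard_eq_toFinset_card _ h).symm (by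
    rw [h.coe_toFinset]; exact fun t ht => ht.1)
  rw [h.coe_toFinset] at hr
  obtain ⟨a, ha⟩ := exists_isPCRep (u := u) hx h0 h1 (by
    rw [hr]; exact (subset_insert _ _).trans (subset_insert _ _))
  refine ⟨x, a, ha, fun i hi hi' => ?_⟩
  rcases hr.subset ⟨i, rfl⟩ with h | h | h
  · exact absurd (hx.injective (h.trans h0.symm)) hi
  · exact absurd (hx.injective (h.trans h1.symm)) hi'
  · exact h

lemma isPC_iff {u : ℝ → ℝ} : IsPC u ↔ (jumpSet u).Finite := by
  refine ⟨IsPC.finite_jumpSet, fun h => ?_⟩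
  obtain ⟨x, a, h, -⟩ := exists_minimal_rep h
  exact ⟨_, x, a, h⟩

lemma isPCIn_iff {u : ℝ → ℝ} {S : Set ℝ} :
    IsPCIn u S ↔ (jumpSet u).Finite ∧ jumpSet u ⊆ S := by
  constructor
  · rintro ⟨m, x, a, h, hS⟩
    refine ⟨IsPC.finite_jumpSet ⟨m, x, a, h⟩, ?_⟩
    obtain ⟨n, rfl⟩ := Nat.exists_eq_succ_of_ne_zero h.pos
    refine h.jumpSet_subset.trans ?_
    rintro _ ⟨i, rfl⟩
    refine hS _ (Fin.succ_ne_zero _) fun hl => ?_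
    rw [← Fin.succ_last, Fin.succ_inj] at hl
    exact (Fin.castSucc_lt_last i).ne hl
  · rintro ⟨h, hS⟩
    obtain ⟨x, a, hu, hx⟩ := exists_minimal_rep h
    exact ⟨_, x, a, hu, fun i h0 h1 => hS (hx i h0 h1)⟩

lemma IsPCRep.jumps_le {u : ℝ → ℝ} {n : ℕ} {x : Fin (n + 2) → ℝ} {a : Fin (n + 1) → ℝ}
    (h : IsPCRep u x a) : jumps u ≤ n := Nat.sInf_le ⟨x, a, h⟩

lemma jumps_eq_ncard {u : ℝ → ℝ} (h : (jumpSet u).Finite) : jumps u = (jumpSet u).ncard := by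
  obtain ⟨x, a, hu, -⟩ := exists_minimal_rep h
  refine le_antisymm hu.jumps_le (le_csInf ⟨_, x, a, hu⟩ ?_)
  rintro n ⟨y, b, hy⟩
  calc (jumpSet u).ncard ≤ (range fun i : Fin n => y i.castSucc.succ).ncard :=
        ncard_le_ncard hy.jumpSet_subset (finite_range _)
    _ ≤ n := by
        rw [← image_univ]
        refine (ncard_image_le finite_univ).trans ?_
        simp [ncard_univ]

lemma integrable_stepF {m : ℕ} (x : Fin (m + 1) → ℝ) (a : Fin m → ℝ) :
    Integrable (stepF x a) mu01 := by
  unfold stepF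
  exact integrable_finsetSum _ fun l _ => (integrable_const _).indicator measurableSet_Ioo

lemma IsPC.integrable {u : ℝ → ℝ} (h : IsPC u) : Integrable u mu01 := by
  obtain ⟨m, x, a, -, -, -, h⟩ := h
  exact (integrable_stepF x a).congr (h.mono fun _ h => h.symm)

lemma IsPCIn.isPC {u : ℝ → ℝ} {S : Set ℝ} (h : IsPCIn u S) : IsPC u := by
  obtain ⟨m, x, a, h, -⟩ := h
  exact ⟨m, x, a, h⟩

lemma L1dist_nonneg (u v : ℝ → ℝ) : 0 ≤ L1dist u v := integral_nonneg fun _ => abs_nonneg _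

lemma L1dist_comm (u v : ℝ → ℝ) : L1dist u v = L1dist v u := by
  simp only [L1dist, abs_sub_comm]

lemma integrable_abs_sub {μ : Measure ℝ} {u v : ℝ → ℝ} (hu : Integrable u μ)
    (hv : Integrable v μ) : Integrable (fun t => |u t - v t|) μ := (hu.sub hv).abs

lemma L1dist_triangle {u v w : ℝ → ℝ} (hu : Integrable u mu01) (hv : Integrable v mu01)
    (hw : Integrable w mu01) : L1dist u w ≤ L1dist u v + L1dist v w := by
  unfold L1dist
  rw [← integral_add (integrable_abs_sub hu hv) (integrable_abs_sub hv hw)]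
  exact integral_mono (integrable_abs_sub hu hw)
    ((integrable_abs_sub hu hv).add (integrable_abs_sub hv hw))
    fun t => abs_sub_le _ _ _

lemma L1dist_congr {u u' f : ℝ → ℝ} (h : ∀ᵐ t ∂mu01, u t = u' t) :
    L1dist u f = L1dist u' f :=
  integral_congr_ae (h.mono fun t ht => by simp only [ht])

/-- Being a.e. constant on a fixed set passes to `L¹` limits. -/
lemma ae_const_of_tendsto {u : ℝ → ℝ} (hu : Integrable u mu01) {v : ℕ → ℝ → ℝ}
    (hv : ∀ k, Integrable (v k) mu01) (hlim : Tendsto (fun k => L1dist (v k) u) atTop (nhds 0))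
    {U : Set ℝ} (hU : MeasurableSet U)
    (hc : ∃ᶠ k in atTop, ∃ c, ∀ᵐ s ∂mu01, s ∈ U → v k s = c) :
    ∃ c, ∀ᵐ s ∂mu01, s ∈ U → u s = c := by
  rcases eq_or_ne (mu01 U) 0 with h0 | h0
  · refine ⟨0, ?_⟩
    filter_upwards [measure_eq_zero_iff_ae_notMem.1 h0] with s hs hs'
    exact absurd hs' hs
  set r : ℝ := mu01.real U with hr
  have hrpos : 0 < r := ENNReal.toReal_pos h0 (measure_ne_top _ _)
  set c : ℝ := (∫ s in U, u s ∂mu01) / r with hcdef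
  have hIc : Integrable (fun s => |u s - c|) mu01 := (hu.sub (integrable_const c)).abs
  have key : ∃ᶠ k in atTop, ∫ s in U, |u s - c| ∂mu01 ≤ 2 * L1dist (v k) u := by
    refine hc.mono ?_
    rintro k ⟨d, hd⟩
    have hd' : ∀ᵐ s ∂(mu01.restrict U), v k s = d := (ae_restrict_iff' hU).2 hd
    have hle : ∫ s in U, |v k s - u s| ∂mu01 ≤ L1dist (v k) u :=
      setIntegral_le_integral ((hv k).sub hu).abs (ae_of_all _ fun _ => abs_nonneg _)
    have hdc : r * |d - c| ≤ L1dist (v k) u := by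
      have h1 : r * (d - c) = ∫ s in U, (v k s - u s) ∂mu01 := by
        rw [integral_sub (hv k).integrableOn hu.integrableOn, integral_congr_ae hd',
          setIntegral_const, smul_eq_mul, ← hr, mul_sub, hcdef, mul_div_cancel₀ _ hrpos.ne']
      calc r * |d - c| = |r * (d - c)| := by rw [abs_mul, abs_of_pos hrpos]
        _ ≤ ∫ s in U, |v k s - u s| ∂mu01 := by rw [h1]; exact abs_integral_le_integral_abs
        _ ≤ _ := hle
    calc ∫ s in U, |u s - c| ∂mu01 ≤ ∫ s in U, (|v k s - u s| + |d - c|) ∂mu01 := by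
          refine integral_mono_ae hIc.integrableOn
            ((((hv k).sub hu).abs.add (integrable_const _)).integrableOn) ?_
          filter_upwards [hd'] with s hs
          rw [← hs, abs_sub_comm (v k s) (u s)]
          exact abs_sub_le _ _ _
      _ = ∫ s in U, |v k s - u s| ∂mu01 + r * |d - c| := by
          rw [integral_add (integrable_abs_sub (hv k) hu).integrableOn
            (integrable_const _).integrableOn, setIntegral_const, smul_eq_mul]
      _ ≤ 2 * L1dist (v k) u := by linarith
  have hz : ∫ s in U, |u s - c| ∂mu01 ≤ 0 := by
    have h2 : Tendsto (fun k => 2 * L1dist (v k) u) atTop (nhds 0) := by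
      simpa using hlim.const_mul 2
    exact ge_of_tendsto_of_frequently h2 key
  have hz' := le_antisymm hz (integral_nonneg fun _ => abs_nonneg _)
  rw [integral_eq_zero_iff_of_nonneg (fun _ => abs_nonneg _) hIc.integrableOn] at hz'
  refine ⟨c, (ae_restrict_iff' hU).1 ?_⟩
  filter_upwards [hz'] with s hs
  exact sub_eq_zero.1 (abs_eq_zero.1 hs)

lemma eventually_jumpSet_inter_nonempty {u : ℝ → ℝ} (hu : Integrable u mu01) {v : ℕ → ℝ → ℝ}
    (hv : ∀ k, Integrable (v k) mu01) (hlim : Tendsto (fun k => L1dist (v k) u) atTop (nhds 0))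
    {t : ℝ} (ht : t ∈ jumpSet u) {U : Set ℝ} (hU : U ∈ nhds t) :
    ∀ᶠ k in atTop, (jumpSet (v k) ∩ U).Nonempty := by
  obtain ⟨p, q, hpq, hsub⟩ :=
    mem_nhds_iff_exists_Ioo_subset.1 (inter_mem hU (Ioo_mem_nhds ht.1.1 ht.1.2))
  by_contra hcon
  rw [not_eventually] at hcon
  obtain ⟨c, hc⟩ := ae_const_of_tendsto hu hv hlim (measurableSet_Ioo (a := p) (b := q)) <| by
    refine hcon.mono fun k hk => ae_const_of_aeConstAt (fun s hs => (hsub hs).2) fun s hs => ?_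
    by_contra h
    exact hk ⟨s, ⟨(hsub hs).2, h⟩, (hsub hs).1⟩
  exact ht.2 ⟨_, Ioo_mem_nhds hpq.1 hpq.2, c, hc⟩

/-- Lower semicontinuity of the size of the jump set, for finite subsets of the jump set. -/
lemma eventually_card_le {u : ℝ → ℝ} (hu : Integrable u mu01) {v : ℕ → ℝ → ℝ}
    (hv : ∀ k, Integrable (v k) mu01) (hlim : Tendsto (fun k => L1dist (v k) u) atTop (nhds 0))
    {F : Finset ℝ} (hF : (F : Set ℝ) ⊆ jumpSet u) :
    ∀ᶠ k in atTop, (jumpSet (v k)).Finite → F.card ≤ (jumpSet (v k)).ncard := by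
  obtain ⟨W, hW, hdisj⟩ := F.finite_toSet.t2_separation
  have h : ∀ᶠ k in atTop, ∀ t ∈ F, (jumpSet (v k) ∩ W t).Nonempty :=
    (Filter.eventually_all_finset F).2 fun t ht =>
      eventually_jumpSet_inter_nonempty hu hv hlim (hF ht) ((hW t).2.mem_nhds (hW t).1)
  filter_upwards [h] with k hk hfin
  choose! g hg using hk
  rw [ncard_eq_toFinset_card _ hfin]
  refine Finset.card_le_card_of_injOn g (fun t ht => by simpa using (hg t ht).1) ?_
  intro s hs t ht hst
  by_contra hne
  exact disjoint_left.1 (hdisj hs ht hne) (hg s hs).2 (hst ▸ (hg t ht).2)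

/-- The liminf inequality, along arbitrary admissible jump sets. -/
lemma Potts_le_liminf {f : ℝ → ℝ} (hf : Integrable f mu01) {γ : ℝ} (hγ : 0 < γ)
    (S : ℕ → Set ℝ) {u : ℝ → ℝ} (hu : Integrable u mu01) {v : ℕ → ℝ → ℝ}
    (hv : ∀ k, Integrable (v k) mu01)
    (hlim : Tendsto (fun k => L1dist (v k) u) atTop (nhds 0)) :
    Potts γ f u ≤ liminf (fun k => PottsIn γ f (S k) (v k)) atTop := by
  refine le_of_forall_gt_imp_ge_of_dense fun b hb => ?_
  rcases eq_or_ne b ⊤ with rfl | hbtop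
  · exact le_top
  have hfreq := frequently_lt_of_liminf_lt (by isBoundedDefault) hb
  have hfreq' : ∃ᶠ k in atTop, (jumpSet (v k)).Finite ∧
      γ * (jumpSet (v k)).ncard + L1dist (v k) f ≤ b.toReal := by
    refine hfreq.mono fun k hk => ?_
    unfold PottsIn at hk
    split_ifs at hk with h
    · have hfin := (isPCIn_iff.1 h).1
      refine ⟨hfin, ?_⟩
      rw [jumps_eq_ncard hfin] at hk
      exact (ENNReal.ofReal_le_iff_le_toReal hbtop).1 hk.le
    · exact absurd hk not_top_lt
  have hfin : (jumpSet u).Finite := by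
    by_contra hinf
    obtain ⟨N, hN⟩ := exists_nat_gt (b.toReal / γ)
    obtain ⟨F, hF, hcard⟩ := Set.Infinite.exists_subset_card_eq hinf N
    obtain ⟨k, ⟨h1, h2⟩, h3⟩ :=
      (hfreq'.and_eventually (eventually_card_le hu hv hlim hF)).exists
    have h4 : (N : ℝ) ≤ (jumpSet (v k)).ncard := by exact_mod_cast hcard ▸ h3 h1
    have h5 := L1dist_nonneg (v k) f
    rw [div_lt_iff₀ hγ] at hN
    nlinarith
  have hev := eventually_card_le hu hv hlim (F := hfin.toFinset) (by simp)
  rw [Potts, if_pos (isPC_iff.2 hfin), jumps_eq_ncard hfin,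
    ENNReal.ofReal_le_iff_le_toReal hbtop]
  have ht : Tendsto (fun k => b.toReal + L1dist (v k) u) atTop (nhds b.toReal) := by
    simpa using hlim.const_add b.toReal
  refine ge_of_tendsto_of_frequently ht ((hfreq'.and_eventually hev).mono ?_)
  rintro k ⟨⟨h1, h2⟩, h3⟩
  have h4 : ((jumpSet u).ncard : ℝ) ≤ (jumpSet (v k)).ncard := by
    have := h3 h1
    rw [← ncard_eq_toFinset_card _ hfin] at this
    exact_mod_cast this
  have h5 := L1dist_triangle hu (hv k) hf
  rw [L1dist_comm u (v k)] at h5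
  nlinarith

lemma mu01_real_Ioo {p q : ℝ} (hp : 0 ≤ p) (hpq : p ≤ q) (hq : q ≤ 1) :
    mu01.real (Ioo p q) = q - p := by
  rw [mu01, measureReal_restrict_apply measurableSet_Ioo, inter_eq_left.2, Real.volume_real_Ioo,
    max_eq_left (sub_nonneg.2 hpq)]
  exact fun t ht => ⟨hp.trans ht.1.le, ht.2.le.trans hq⟩

lemma mem_Icc_of_monotone {m : ℕ} {x : Fin (m + 1) → ℝ} (hx : Monotone x) (h0 : x 0 = 0)
    (h1 : x (Fin.last m) = 1) (i : Fin (m + 1)) : x i ∈ Icc (0:ℝ) 1 :=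
  ⟨h0 ▸ hx (Fin.zero_le i), h1 ▸ hx (Fin.le_last i)⟩

lemma mu01_real_piece {m : ℕ} {x : Fin (m + 1) → ℝ} (hx : Monotone x) (h0 : x 0 = 0)
    (h1 : x (Fin.last m) = 1) (l : Fin m) :
    mu01.real (Ioo (x l.castSucc) (x l.succ)) = x l.succ - x l.castSucc :=
  mu01_real_Ioo (mem_Icc_of_monotone hx h0 h1 _).1 (hx l.castSucc_le_succ)
    (mem_Icc_of_monotone hx h0 h1 _).2

lemma pairwise_disjoint_pieces {m : ℕ} {x : Fin (m + 1) → ℝ} (hx : Monotone x) :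
    Pairwise (Function.onFun Disjoint fun l : Fin m => Ioo (x l.castSucc) (x l.succ)) := by
  intro i j hij
  refine disjoint_left.2 fun t ht ht' => hij ?_
  have h1 := stepF_apply hx (fun l => ((l : ℕ) : ℝ)) ht
  rw [stepF_apply hx (fun l => ((l : ℕ) : ℝ)) ht'] at h1
  exact Fin.ext (by exact_mod_cast h1.symm)

lemma integral_eq_sum_pieces {m : ℕ} {x : Fin (m + 1) → ℝ} (hx : Monotone x) (h0 : x 0 = 0)
    (h1 : x (Fin.last m) = 1) {g : ℝ → ℝ} (hg : Integrable g mu01) :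
    ∫ t, g t ∂mu01 = ∑ l : Fin m, ∫ t in Ioo (x l.castSucc) (x l.succ), g t ∂mu01 := by
  rw [← integral_iUnion_fintype (fun _ => measurableSet_Ioo) (pairwise_disjoint_pieces hx)
    fun _ => hg.integrableOn, Measure.restrict_eq_self_of_ae_mem]
  filter_upwards [ae_mem_Ioo, ae_notMem_range x] with t ht1 ht2
  exact mem_iUnion.2 (exists_mem_Ioo (by rw [h0]; exact ht1.1) (by rw [h1]; exact ht1.2) ht2)

lemma L1dist_stepF {m : ℕ} {x : Fin (m + 1) → ℝ} (hx : Monotone x) (h0 : x 0 = 0)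
    (h1 : x (Fin.last m) = 1) (a : Fin m → ℝ) {f : ℝ → ℝ} (hf : Integrable f mu01) :
    L1dist (stepF x a) f =
      ∑ l : Fin m, ∫ t in Ioo (x l.castSucc) (x l.succ), |a l - f t| ∂mu01 := by
  rw [L1dist, integral_eq_sum_pieces hx h0 h1 (integrable_abs_sub (integrable_stepF x a) hf)]
  refine Finset.sum_congr rfl fun l _ => setIntegral_congr_fun measurableSet_Ioo fun t ht => ?_
  simp only [stepF_apply hx a ht]

lemma L1dist_stepF_stepF {m : ℕ} {x : Fin (m + 1) → ℝ} (hx : Monotone x) (h0 : x 0 = 0)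
    (h1 : x (Fin.last m) = 1) (a b : Fin m → ℝ) :
    L1dist (stepF x a) (stepF x b) = ∑ l : Fin m, |a l - b l| * (x l.succ - x l.castSucc) := by
  rw [L1dist_stepF hx h0 h1 a (integrable_stepF x b)]
  refine Finset.sum_congr rfl fun l _ => ?_
  rw [setIntegral_congr_fun measurableSet_Ioo (g := fun _ => |a l - b l|)
    fun t ht => by simp only [stepF_apply hx b ht], setIntegral_const,
    mu01_real_piece hx h0 h1, smul_eq_mul, mul_comm]

lemma tendsto_indicator_Ioo {p q c : ℕ → ℝ} {p₀ q₀ c₀ t : ℝ} (hp : Tendsto p atTop (nhds p₀))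
    (hq : Tendsto q atTop (nhds q₀)) (hc : Tendsto c atTop (nhds c₀)) (htp : t ≠ p₀)
    (htq : t ≠ q₀) :
    Tendsto (fun k => indicator (Ioo (p k) (q k)) (fun _ => c k) t) atTop
      (nhds (indicator (Ioo p₀ q₀) (fun _ => c₀) t)) := by
  by_cases h : t ∈ Ioo p₀ q₀
  · rw [indicator_of_mem h]
    refine hc.congr' ?_
    filter_upwards [hp.eventually_lt_const h.1, hq.eventually_const_lt h.2] with k h1 h2
    exact (indicator_of_mem (show t ∈ Ioo (p k) (q k) from ⟨h1, h2⟩) fun _ => c k).symm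
  · rw [indicator_of_notMem h]
    refine (tendsto_const_nhds (x := (0:ℝ))).congr' ?_
    rcases lt_or_gt_of_ne htp with h' | h'
    · filter_upwards [hp.eventually_const_lt h'] with k h1
      exact (indicator_of_notMem (fun hm : t ∈ Ioo (p k) (q k) => lt_asymm h1 hm.1) _).symm
    · have h2 : q₀ < t := lt_of_le_of_ne (not_lt.1 fun hlt => h ⟨h', hlt⟩) htq.symm
      filter_upwards [hq.eventually_lt_const h2] with k h1
      exact (indicator_of_notMem (fun hm : t ∈ Ioo (p k) (q k) => lt_asymm h1 hm.2) _).symm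

/-- Step functions depend continuously in `L¹` on their partition points and values. -/
lemma tendsto_L1dist_stepF {m : ℕ} {y : ℕ → Fin (m + 1) → ℝ} {x : Fin (m + 1) → ℝ}
    (hy : ∀ i, Tendsto (fun k => y k i) atTop (nhds (x i))) {b : ℕ → Fin m → ℝ} {a : Fin m → ℝ}
    (hb : ∀ l, Tendsto (fun k => b k l) atTop (nhds (a l))) :
    Tendsto (fun k => L1dist (stepF (y k) (b k)) (stepF x a)) atTop (nhds 0) := by
  have hbd : ∀ᶠ k in atTop, ∀ l, |b k l| ≤ |a l| + 1 :=
    eventually_all.2 fun l => (hb l).abs.eventually_le_const (lt_add_one _)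
  have hle : ∀ (z : Fin (m + 1) → ℝ) (c : Fin m → ℝ) t, |stepF z c t| ≤ ∑ l, |c l| := by
    intro z c t
    refine (Finset.abs_sum_le_sum_abs _ _).trans (Finset.sum_le_sum fun l _ => ?_)
    simpa [Real.norm_eq_abs] using
      norm_indicator_le_norm_self (s := Ioo (z l.castSucc) (z l.succ)) (fun _ : ℝ => c l) t
  have h := tendsto_integral_filter_of_dominated_convergence (μ := mu01) (l := atTop)
    (F := fun k t => |stepF (y k) (b k) t - stepF x a t|) (f := fun _ => (0:ℝ))
    (fun _ => ∑ l, (|a l| + 1) + ∑ l, |a l|) ?_ ?_ (integrable_const _) ?_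
  · simpa [L1dist] using h
  · exact Eventually.of_forall fun k =>
      (integrable_abs_sub (integrable_stepF _ _) (integrable_stepF _ _)).aestronglyMeasurable
  · filter_upwards [hbd] with k hk
    refine ae_of_all _ fun t => ?_
    rw [Real.norm_eq_abs, abs_abs]
    exact (abs_sub _ _).trans (add_le_add ((hle _ _ _).trans
      (Finset.sum_le_sum fun l _ => hk l)) (hle _ _ _))
  · filter_upwards [ae_notMem_range x] with t ht
    have : Tendsto (fun k => stepF (y k) (b k) t) atTop (nhds (stepF x a t)) := by
      unfold stepF
      exact tendsto_finsetSum _ fun l _ => tendsto_indicator_Ioo (hy _) (hy _) (hb l)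
        (fun h => ht ⟨_, h.symm⟩) (fun h => ht ⟨_, h.symm⟩)
    simpa using (this.sub_const (stepF x a t)).abs

lemma exists_tendsto_of_dense {X : ℕ → Set ℝ} (hXfin : ∀ k, (X k).Finite)
    (hXnest : ∀ k, X k ⊆ X (k + 1)) {p : ℝ} (hp : p ∈ closure (⋃ k, X k)) :
    ∃ z : ℕ → ℝ, Tendsto z atTop (nhds p) ∧ ∀ᶠ k in atTop, z k ∈ X k := by
  have hmono : Monotone X := monotone_nat_of_le_succ hXnest
  have hex : ∀ k, ∃ z, (X k).Nonempty → z ∈ X k ∧ Metric.infDist p (X k) = dist p z := by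
    intro k
    by_cases hne : (X k).Nonempty
    · obtain ⟨z, hz, hz'⟩ := (hXfin k).isCompact.exists_infDist_eq_dist hne p
      exact ⟨z, fun _ => ⟨hz, hz'⟩⟩
    · exact ⟨0, fun h => absurd h hne⟩
  choose z hz using hex
  have hnear : ∀ ε > 0, ∀ᶠ k in atTop, ∃ q ∈ X k, dist p q < ε := by
    intro ε hε
    obtain ⟨q, hq, hd⟩ := Metric.mem_closure_iff.1 hp ε hε
    obtain ⟨K, hK⟩ := mem_iUnion.1 hq
    filter_upwards [eventually_ge_atTop K] with k hk
    exact ⟨q, hmono hk hK, hd⟩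
  refine ⟨z, Metric.tendsto_nhds.2 fun ε hε => ?_, ?_⟩
  · filter_upwards [hnear ε hε] with k hk
    obtain ⟨q, hq, hd⟩ := hk
    rw [dist_comm, ← (hz k ⟨q, hq⟩).2]
    exact (Metric.infDist_le_dist_of_mem hq).trans_lt hd
  · filter_upwards [hnear 1 one_pos] with k hk
    obtain ⟨q, hq, -⟩ := hk
    exact (hz k ⟨q, hq⟩).1

lemma eventually_strictMono {m : ℕ} {y : ℕ → Fin (m + 1) → ℝ} {x : Fin (m + 1) → ℝ}
    (hx : StrictMono x) (hy : ∀ i, Tendsto (fun k => y k i) atTop (nhds (x i))) :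
    ∀ᶠ k in atTop, StrictMono (y k) := by
  have h : ∀ᶠ k in atTop, ∀ i : Fin m, y k i.castSucc < y k i.succ :=
    eventually_all.2 fun i => (hy _).eventually_lt (hy _) (hx i.castSucc_lt_succ)
  exact h.mono fun k hk => Fin.strictMono_iff_lt_succ.2 hk

/-- Existence of recovery sequences. -/
lemma exists_recovery {f : ℝ → ℝ} (hf : Integrable f mu01) {γ : ℝ} (hγ : 0 < γ)
    {X : ℕ → Set ℝ} (hXfin : ∀ k, (X k).Finite) (hXnest : ∀ k, X k ⊆ X (k + 1))
    (hXdense : Icc (0:ℝ) 1 ⊆ closure (⋃ k, X k)) {u : ℝ → ℝ} (hu : Integrable u mu01) :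
    ∃ v : ℕ → ℝ → ℝ, (∀ k, Integrable (v k) mu01) ∧
      Tendsto (fun k => L1dist (v k) u) atTop (nhds 0) ∧
      limsup (fun k => PottsIn γ f (X k) (v k)) atTop ≤ Potts γ f u := by
  by_cases hPC : IsPC u
  swap
  · refine ⟨fun _ => u, fun _ => hu, by simp [L1dist], ?_⟩
    rw [Potts, if_neg hPC]
    exact le_top
  have hfin := isPC_iff.1 hPC
  obtain ⟨x, a, ⟨hx, h0, h1, hrep⟩, -⟩ := exists_minimal_rep hfin
  have hz : ∀ i, ∃ z : ℕ → ℝ, Tendsto z atTop (nhds (x i)) ∧ ∀ᶠ k in atTop, z k ∈ X k :=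
    fun i => exists_tendsto_of_dense hXfin hXnest
      (hXdense (mem_Icc_of_monotone hx.monotone h0 h1 i))
  choose z hz hzX using hz
  set y : ℕ → Fin ((jumpSet u).ncard + 2) → ℝ := fun k i =>
    if i = 0 then 0 else if i = Fin.last _ then 1 else z i k with hydef
  have hy : ∀ i, Tendsto (fun k => y k i) atTop (nhds (x i)) := by
    intro i
    simp only [hydef]
    split_ifs with h h'
    · rw [h, h0]; exact tendsto_const_nhds
    · rw [h', h1]; exact tendsto_const_nhds
    · exact hz i
  have hlim : Tendsto (fun k => L1dist (stepF (y k) a) u) atTop (nhds 0) := by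
    refine (tendsto_L1dist_stepF hy fun l => tendsto_const_nhds (x := a l)).congr fun k => ?_
    rw [L1dist_comm, L1dist_comm _ u, L1dist_congr hrep]
  refine ⟨fun k => stepF (y k) a, fun k => integrable_stepF _ _, hlim, ?_⟩
  have hbound : ∀ᶠ k in atTop, PottsIn γ f (X k) (stepF (y k) a) ≤
      ENNReal.ofReal (γ * jumps u + L1dist u f + L1dist (stepF (y k) a) u) := by
    filter_upwards [eventually_strictMono hx hy, eventually_all.2 hzX] with k hk hkX
    have hr : IsPCRep (stepF (y k) a) (y k) a :=
      ⟨hk, by simp [hydef], by simp [hydef], ae_of_all _ fun _ => rfl⟩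
    have hIn : IsPCIn (stepF (y k) a) (X k) :=
      ⟨_, y k, a, hr, fun i hi hi' => by simpa only [hydef, if_neg hi, if_neg hi'] using hkX i⟩
    rw [PottsIn, if_pos hIn]
    refine ENNReal.ofReal_le_ofReal ?_
    have hj : (jumps (stepF (y k) a) : ℝ) ≤ jumps u := by
      rw [jumps_eq_ncard hfin]; exact_mod_cast hr.jumps_le
    have ht := L1dist_triangle (integrable_stepF (y k) a) hu hf
    nlinarith
  refine (limsup_le_limsup hbound).trans ?_
  have ht : Tendsto (fun k => ENNReal.ofReal
      (γ * jumps u + L1dist u f + L1dist (stepF (y k) a) u)) atTop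
      (nhds (ENNReal.ofReal (γ * jumps u + L1dist u f))) :=
    ENNReal.tendsto_ofReal (by simpa using hlim.const_add (γ * jumps u + L1dist u f))
  rw [ht.limsup_eq, Potts, if_pos hPC]

/-- A constant of best `L¹` approximation exists on every set of positive measure. -/
lemma exists_best_const {f : ℝ → ℝ} (hf : Integrable f mu01) {U : Set ℝ}
    (hU : 0 < mu01.real U) :
    ∃ c : ℝ, ∀ d, ∫ t in U, |c - f t| ∂mu01 ≤ ∫ t in U, |d - f t| ∂mu01 := by
  have hi : ∀ c : ℝ, IntegrableOn (fun t => |c - f t|) U mu01 := fun c =>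
    (integrable_abs_sub (integrable_const c) hf).integrableOn
  have hLip : ∀ c d : ℝ, ∫ t in U, |c - f t| ∂mu01 ≤
      ∫ t in U, |d - f t| ∂mu01 + mu01.real U * |c - d| := by
    intro c d
    have : ∫ t in U, |d - f t| ∂mu01 + mu01.real U * |c - d| =
        ∫ t in U, (|d - f t| + |c - d|) ∂mu01 := by
      rw [integral_add (hi d) (integrable_const _).integrableOn, setIntegral_const, smul_eq_mul]
    rw [this]
    refine integral_mono (hi c) ((hi d).add (integrable_const _).integrableOn) fun t => ?_
    linarith [abs_sub_le c d (f t)]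
  have hcont : Continuous fun c : ℝ => ∫ t in U, |c - f t| ∂mu01 := by
    refine (LipschitzWith.of_le_add_mul (mu01.real U).toNNReal fun c d => ?_).continuous
    rw [Real.coe_toNNReal _ hU.le, Real.dist_eq]
    exact hLip c d
  refine hcont.exists_forall_le ?_
  have hlow : ∀ c : ℝ, mu01.real U * ‖c‖ - ∫ t in U, |f t| ∂mu01 ≤
      ∫ t in U, |c - f t| ∂mu01 := by
    intro c
    have : mu01.real U * ‖c‖ - ∫ t in U, |f t| ∂mu01 = ∫ t in U, (|c| - |f t|) ∂mu01 := by
      rw [integral_sub (integrable_const _).integrableOn hf.abs.integrableOn, setIntegral_const,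
        smul_eq_mul, Real.norm_eq_abs]
    rw [this]
    exact integral_mono ((integrable_const _).integrableOn.sub hf.abs.integrableOn) (hi c)
      fun t => abs_sub_abs_le_abs_sub _ _
  refine tendsto_atTop_mono hlow (tendsto_atTop_add_const_right _ _ ?_)
  exact (tendsto_norm_cocompact_atTop).const_mul_atTop hU

lemma exists_best_stepF {f : ℝ → ℝ} (hf : Integrable f mu01) {m : ℕ} {x : Fin (m + 1) → ℝ}
    (hx : StrictMono x) (h0 : x 0 = 0) (h1 : x (Fin.last m) = 1) :
    ∃ a, ∀ b, L1dist (stepF x a) f ≤ L1dist (stepF x b) f := by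
  choose a ha using fun l : Fin m => exists_best_const hf
    (U := Ioo (x l.castSucc) (x l.succ)) (by
      rw [mu01_real_piece hx.monotone h0 h1, sub_pos]; exact hx l.castSucc_lt_succ)
  refine ⟨a, fun b => ?_⟩
  rw [L1dist_stepF hx.monotone h0 h1 a hf, L1dist_stepF hx.monotone h0 h1 b hf]
  exact Finset.sum_le_sum fun l _ => ha l _

lemma exists_best_of_jumpSet_subset {f : ℝ → ℝ} (hf : Integrable f mu01) {T : Finset ℝ}
    (hT : (T : Set ℝ) ⊆ Ioo 0 1) :
    ∃ w : ℝ → ℝ, IsPCIn w T ∧ jumps w ≤ T.card ∧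
      ∀ v, jumpSet v ⊆ T → L1dist w f ≤ L1dist v f := by
  obtain ⟨x, hx, h0, h1, hr⟩ := exists_partition (rfl : T.card = _) hT
  obtain ⟨a, ha⟩ := exists_best_stepF hf hx h0 h1
  have hrep : IsPCRep (stepF x a) x a := ⟨hx, h0, h1, ae_of_all _ fun _ => rfl⟩
  refine ⟨stepF x a, ⟨_, x, a, hrep, fun i hi hi' => ?_⟩, hrep.jumps_le, fun v hv => ?_⟩
  · rcases hr.subset ⟨i, rfl⟩ with h | h | h
    · exact absurd (hx.injective (h.trans h0.symm)) hi
    · exact absurd (hx.injective (h.trans h1.symm)) hi'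
    · exact h
  · obtain ⟨b, hb⟩ := exists_isPCRep (u := v) hx h0 h1 (by
      rw [hr]; exact hv.trans ((subset_insert _ _).trans (subset_insert _ _)))
    rw [L1dist_congr hb.2.2.2]
    exact ha b

/-- The semi-discrete Potts functional with finitely many admissible jumps has a minimizer. -/
lemma exists_minimizer {f : ℝ → ℝ} (hf : Integrable f mu01) {γ : ℝ} (hγ : 0 < γ) {S : Set ℝ}
    (hS : S.Finite) : ∃ u, ∀ v, PottsIn γ f S u ≤ PottsIn γ f S v := by
  have hS' : (S ∩ Ioo 0 1).Finite := hS.inter_of_left _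
  have hex : ∀ T ∈ hS'.toFinset.powerset, ∃ w : ℝ → ℝ, IsPCIn w T ∧ jumps w ≤ T.card ∧
      ∀ v, jumpSet v ⊆ T → L1dist w f ≤ L1dist v f := by
    intro T hT
    rw [Finset.mem_powerset] at hT
    exact exists_best_of_jumpSet_subset hf fun t ht => (hS'.mem_toFinset.1 (hT ht)).2
  choose! w hwIn hwj hw using hex
  obtain ⟨T₀, -, hT₀⟩ := Finset.exists_min_image hS'.toFinset.powerset
    (fun T => PottsIn γ f S (w T)) ⟨∅, Finset.empty_mem_powerset _⟩
  refine ⟨w T₀, fun v => ?_⟩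
  by_cases hv : IsPCIn v S
  swap
  · rw [PottsIn.eq_def γ f S v, if_neg hv]
    exact le_top
  obtain ⟨hfin, hsub⟩ := isPCIn_iff.1 hv
  have hT : hfin.toFinset ∈ hS'.toFinset.powerset := by
    rw [Finset.mem_powerset, Finite.toFinset_subset_toFinset]
    exact fun t ht => ⟨hsub ht, ht.1⟩
  refine (hT₀ _ hT).trans ?_
  have hIn : IsPCIn (w hfin.toFinset) S := by
    obtain ⟨h1, h2⟩ := isPCIn_iff.1 (hwIn _ hT)
    rw [hfin.coe_toFinset] at h2
    exact isPCIn_iff.2 ⟨h1, h2.trans hsub⟩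
  rw [PottsIn, if_pos hIn, PottsIn, if_pos hv]
  refine ENNReal.ofReal_le_ofReal (add_le_add ?_ (hw _ hT v (by simp)))
  refine mul_le_mul_of_nonneg_left ?_ hγ.le
  rw [jumps_eq_ncard hfin, ncard_eq_toFinset_card _ hfin]
  exact_mod_cast hwj _ hT

lemma isPCIn_of_PottsIn_lt_top {γ : ℝ} {f u : ℝ → ℝ} {S : Set ℝ} (h : PottsIn γ f S u < ⊤) :
    IsPCIn u S := by
  by_contra hu
  rw [PottsIn, if_neg hu] at h
  exact lt_irrefl _ h

lemma jumpSet_zero : jumpSet (fun _ => 0) = ∅ := by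
  refine eq_empty_of_forall_notMem fun t ht => ht.2 ⟨univ, univ_mem, 0, ?_⟩
  simp

lemma PottsIn_zero (γ : ℝ) (f : ℝ → ℝ) (S : Set ℝ) :
    PottsIn γ f S (fun _ => 0) = ENNReal.ofReal (L1dist (fun _ => 0) f) := by
  have hfin : (jumpSet fun _ => 0).Finite := by rw [jumpSet_zero]; exact finite_empty
  rw [PottsIn, if_pos (isPCIn_iff.2 ⟨hfin, by rw [jumpSet_zero]; exact empty_subset _⟩),
    jumps_eq_ncard hfin, jumpSet_zero]
  simp

lemma isPCIn_of_minimizer {γ : ℝ} {f u : ℝ → ℝ} {S : Set ℝ}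
    (hmin : ∀ v, PottsIn γ f S u ≤ PottsIn γ f S v) : IsPCIn u S := by
  refine isPCIn_of_PottsIn_lt_top ((hmin fun _ => 0).trans_lt ?_)
  rw [PottsIn_zero]
  exact ENNReal.ofReal_lt_top

lemma ncard_le_of_minimizer {γ : ℝ} (hγ : 0 < γ) {f u : ℝ → ℝ} {S : Set ℝ}
    (hmin : ∀ v, PottsIn γ f S u ≤ PottsIn γ f S v) :
    ((jumpSet u).ncard : ℝ) ≤ L1dist (fun _ => 0) f / γ := by
  have hIn := isPCIn_of_minimizer hmin
  have h := hmin fun _ => 0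
  rw [PottsIn_zero, PottsIn, if_pos hIn, ENNReal.ofReal_le_ofReal_iff (L1dist_nonneg _ _),
    jumps_eq_ncard (isPCIn_iff.1 hIn).1] at h
  rw [le_div_iff₀ hγ]
  linarith [L1dist_nonneg u f]

/-- On each piece of a minimizer, its mass is controlled by the mass of the data: otherwise
replacing the value on that piece by `0` would be cheaper. -/
lemma exists_rep_of_minimizer {γ : ℝ} (hγ : 0 < γ) {f : ℝ → ℝ} (hf : Integrable f mu01)
    {u : ℝ → ℝ} {S : Set ℝ} (hmin : ∀ v, PottsIn γ f S u ≤ PottsIn γ f S v) :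
    ∃ (x : Fin ((jumpSet u).ncard + 2) → ℝ) (a : Fin ((jumpSet u).ncard + 1) → ℝ),
      IsPCRep u x a ∧ ∀ l, |a l * (x l.succ - x l.castSucc)| ≤
        2 * ∫ t in Ioo (x l.castSucc) (x l.succ), |f t| ∂mu01 := by
  have hIn := isPCIn_of_minimizer hmin
  obtain ⟨hfin, hS⟩ := isPCIn_iff.1 hIn
  obtain ⟨x, a, hrep, hxi⟩ := exists_minimal_rep hfin
  refine ⟨x, a, hrep, fun l => ?_⟩
  obtain ⟨hx, h0, h1, hu⟩ := hrep
  have hvrep : IsPCRep (stepF x (Function.update a l 0)) x (Function.update a l 0) :=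
    ⟨hx, h0, h1, ae_of_all _ fun _ => rfl⟩
  have hv : L1dist (stepF x a) f ≤ L1dist (stepF x (Function.update a l 0)) f := by
    have h := hmin (stepF x (Function.update a l 0))
    rw [PottsIn, if_pos hIn, PottsIn,
      if_pos ⟨_, x, _, hvrep, fun i hi hi' => hS (hxi i hi hi')⟩,
      ENNReal.ofReal_le_ofReal_iff (add_nonneg (by positivity) (L1dist_nonneg _ _)),
      jumps_eq_ncard hfin, L1dist_congr hu] at h
    have hj : (jumps (stepF x (Function.update a l 0)) : ℝ) ≤ (jumpSet u).ncard := by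
      exact_mod_cast hvrep.jumps_le
    nlinarith
  set I := Ioo (x l.castSucc) (x l.succ) with hI
  have hpiece : ∫ t in I, |a l - f t| ∂mu01 ≤ ∫ t in I, |f t| ∂mu01 := by
    rw [L1dist_stepF hx.monotone h0 h1 _ hf, L1dist_stepF hx.monotone h0 h1 _ hf] at hv
    by_contra! hlt
    refine absurd hv (not_le.2 (Finset.sum_lt_sum (fun j _ => ?_) ⟨l, Finset.mem_univ _, ?_⟩))
    · rcases eq_or_ne j l with rfl | hj
      · simpa using hlt.le
      · rw [Function.update_of_ne hj]
    · simpa using hlt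
  have hi : IntegrableOn (fun t => |a l - f t|) I mu01 :=
    (integrable_abs_sub (integrable_const _) hf).integrableOn
  have hconst : |a l * (x l.succ - x l.castSucc)| = ∫ _ in I, |a l| ∂mu01 := by
    rw [setIntegral_const, mu01_real_piece hx.monotone h0 h1, smul_eq_mul, abs_mul,
      abs_of_pos (sub_pos.2 (hx l.castSucc_lt_succ)), mul_comm]
  calc |a l * (x l.succ - x l.castSucc)| = ∫ _ in I, |a l| ∂mu01 := hconst
    _ ≤ ∫ t in I, (|a l - f t| + |f t|) ∂mu01 := by
        refine integral_mono (integrable_const _).integrableOn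
          (hi.add hf.abs.integrableOn) fun t => ?_
        simpa using abs_add_le (a l - f t) (f t)
    _ = ∫ t in I, |a l - f t| ∂mu01 + ∫ t in I, |f t| ∂mu01 :=
        integral_add hi hf.abs.integrableOn
    _ ≤ 2 * ∫ t in I, |f t| ∂mu01 := by linarith

/-- Step functions with a fixed number of pieces, whose mass on each piece is dominated by that
of a fixed integrable function, are relatively compact in `L¹`. -/
lemma exists_subseq_tendsto_stepF {f : ℝ → ℝ} (hf : Integrable f mu01) {m : ℕ}
    {x : ℕ → Fin (m + 1) → ℝ} {a : ℕ → Fin m → ℝ} (hx : ∀ k, Monotone (x k))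
    (h0 : ∀ k, x k 0 = 0) (h1 : ∀ k, x k (Fin.last m) = 1)
    (hbd : ∀ k l, |a k l * (x k l.succ - x k l.castSucc)| ≤
      2 * ∫ t in Ioo (x k l.castSucc) (x k l.succ), |f t| ∂mu01) :
    ∃ (u : ℝ → ℝ) (φ : ℕ → ℕ), Integrable u mu01 ∧ StrictMono φ ∧
      Tendsto (fun i => L1dist (stepF (x (φ i)) (a (φ i))) u) atTop (nhds 0) := by
  set b : ℕ → Fin m → ℝ := fun k l => a k l * (x k l.succ - x k l.castSucc) with hb
  set C : ℝ := 2 * ∫ t, |f t| ∂mu01 with hC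
  have hmem : ∀ k, (x k, b k) ∈ (Icc 0 1 : Set (Fin (m + 1) → ℝ)) ×ˢ
      (Icc (fun _ => -C) (fun _ => C) : Set (Fin m → ℝ)) := by
    intro k
    have hxk := fun i => mem_Icc_of_monotone (hx k) (h0 k) (h1 k) i
    have hbk : ∀ l, |b k l| ≤ C := fun l => (hbd k l).trans
      (mul_le_mul_of_nonneg_left (setIntegral_le_integral hf.abs
        (ae_of_all _ fun _ => abs_nonneg _)) zero_le_two)
    exact ⟨⟨fun i => (hxk i).1, fun i => (hxk i).2⟩,
      fun l => (abs_le.1 (hbk l)).1, fun l => (abs_le.1 (hbk l)).2⟩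
  obtain ⟨⟨y, c⟩, -, φ, hφ, hlim⟩ := (isCompact_Icc.prod isCompact_Icc).tendsto_subseq hmem
  rw [Prod.tendsto_iff] at hlim
  have hy : ∀ i, Tendsto (fun k => x (φ k) i) atTop (nhds (y i)) := tendsto_pi_nhds.1 hlim.1
  have hc : ∀ l, Tendsto (fun k => b (φ k) l) atTop (nhds (c l)) := tendsto_pi_nhds.1 hlim.2
  have hlen : ∀ l : Fin m, Tendsto (fun k => x (φ k) l.succ - x (φ k) l.castSucc) atTop
      (nhds (y l.succ - y l.castSucc)) := fun l => (hy _).sub (hy _)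
  have hcollapse : ∀ l : Fin m, y l.succ - y l.castSucc = 0 → c l = 0 := by
    intro l hl
    have hμ : Tendsto (mu01 ∘ fun k => Ioo (x (φ k) l.castSucc) (x (φ k) l.succ)) atTop
        (nhds 0) := by
      have h := ENNReal.tendsto_ofReal (hlen l)
      rw [hl, ENNReal.ofReal_zero] at h
      refine h.congr fun k => ?_
      rw [← mu01_real_piece (hx _) (h0 _) (h1 _), Function.comp_apply, ofReal_measureReal]
    have h2 := (hf.abs.tendsto_setIntegral_nhds_zero hμ).const_mul 2
    rw [mul_zero] at h2
    have h3 := squeeze_zero (fun k => abs_nonneg _) (fun k => hbd (φ k) l) h2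
    exact abs_eq_zero.1 (tendsto_nhds_unique (hc l).abs h3)
  set A : ℕ → Fin m → ℝ := fun k l => if y l.succ - y l.castSucc = 0 then 0 else a (φ k) l with hA
  set A₀ : Fin m → ℝ := fun l => c l / (y l.succ - y l.castSucc) with hA₀
  have hAlim : ∀ l, Tendsto (fun k => A k l) atTop (nhds (A₀ l)) := by
    intro l
    by_cases hl : y l.succ - y l.castSucc = 0
    · simp [hA, hA₀, hl]
    · refine ((hc l).div (hlen l) hl).congr' ?_
      filter_upwards [(hlen l).eventually_ne hl] with k hk
      simp only [hA, if_neg hl, hb, Pi.div_apply]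
      exact mul_div_cancel_right₀ _ hk
  refine ⟨stepF y A₀, φ, integrable_stepF _ _, hφ, ?_⟩
  have hfirst : Tendsto (fun k => L1dist (stepF (x (φ k)) (a (φ k))) (stepF (x (φ k)) (A k)))
      atTop (nhds 0) := by
    have : Tendsto (fun k => ∑ l : Fin m, if y l.succ - y l.castSucc = 0 then |b (φ k) l| else 0)
        atTop (nhds (∑ l : Fin m, 0)) := by
      refine tendsto_finsetSum _ fun l _ => ?_
      by_cases hl : y l.succ - y l.castSucc = 0
      · simpa [hl, hcollapse l hl] using (hc l).abs
      · simp [hl]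
    rw [Finset.sum_const_zero] at this
    refine this.congr fun k => ?_
    rw [L1dist_stepF_stepF (hx _) (h0 _) (h1 _)]
    refine Finset.sum_congr rfl fun l _ => ?_
    have hnn : 0 ≤ x (φ k) l.succ - x (φ k) l.castSucc :=
      sub_nonneg.2 (hx _ l.castSucc_le_succ)
    by_cases hl : y l.succ - y l.castSucc = 0
    · simp only [hA, hb, if_pos hl, sub_zero, abs_mul, abs_of_nonneg hnn]
    · simp [hA, hl]
  have hsecond := tendsto_L1dist_stepF hy hAlim
  refine squeeze_zero (fun k => L1dist_nonneg _ _) (fun k => L1dist_triangle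
    (integrable_stepF _ _) (integrable_stepF (x (φ k)) (A k)) (integrable_stepF _ _)) ?_
  simpa using hfirst.add hsecond

/-- Sequences of minimizers are relatively compact in `L¹`. -/
lemma exists_accumulation_point {γ : ℝ} (hγ : 0 < γ) {f : ℝ → ℝ} (hf : Integrable f mu01)
    {S : ℕ → Set ℝ} {v : ℕ → ℝ → ℝ}
    (hmin : ∀ k w, PottsIn γ f (S k) (v k) ≤ PottsIn γ f (S k) w) :
    ∃ (u : ℝ → ℝ) (φ : ℕ → ℕ), Integrable u mu01 ∧ StrictMono φ ∧
      Tendsto (fun i => L1dist (v (φ i)) u) atTop (nhds 0) := by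
  obtain ⟨N, hN⟩ := exists_nat_gt (L1dist (fun _ => 0) f / γ)
  have hlt : ∀ k, (jumpSet (v k)).ncard < N := fun k => by
    exact_mod_cast (ncard_le_of_minimizer hγ (hmin k)).trans_lt hN
  obtain ⟨n, hn⟩ : ∃ n, ∃ᶠ k in atTop, (jumpSet (v k)).ncard = n := by
    by_contra! h
    have h' : ∀ᶠ k in atTop, ∀ n ∈ Finset.range N, (jumpSet (v k)).ncard ≠ n :=
      (Filter.eventually_all_finset _).2 fun n _ => h n
    obtain ⟨k, hk⟩ := h'.exists
    exact hk _ (Finset.mem_range.2 (hlt k)) rfl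
  obtain ⟨φ, hφ, hφn⟩ := extraction_of_frequently_atTop hn
  have hex : ∀ k, ∃ (x : Fin (n + 2) → ℝ) (a : Fin (n + 1) → ℝ),
      IsPCRep (v (φ k)) x a ∧ ∀ l, |a l * (x l.succ - x l.castSucc)| ≤
        2 * ∫ t in Ioo (x l.castSucc) (x l.succ), |f t| ∂mu01 := by
    intro k
    have h := exists_rep_of_minimizer hγ hf (hmin (φ k))
    rwa [hφn k] at h
  choose x a hrep hbd using hex
  obtain ⟨u, ψ, hu, hψ, hlim⟩ := exists_subseq_tendsto_stepF hf
    (fun k => (hrep k).1.monotone) (fun k => (hrep k).2.1) (fun k => (hrep k).2.2.1) hbd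
  refine ⟨u, φ ∘ ψ, hu, hφ.comp hψ, hlim.congr fun k => ?_⟩
  exact (L1dist_congr (hrep (ψ k)).2.2.2).symm

theorem statement_2
    (f : ℝ → ℝ) (hf : IntegrableOn f (Set.Icc 0 1))
    (γ : ℝ) (hγ : 0 < γ)
    (X : ℕ → Set ℝ) (hXfin : ∀ k, (X k).Finite) (hXsub : ∀ k, X k ⊆ Set.Icc 0 1)
    (hXnest : ∀ k, X k ⊆ X (k + 1)) (hXdense : Set.Icc (0:ℝ) 1 ⊆ closure (⋃ k, X k)) :
    -- (a) Γ-convergence: liminf inequality …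
    (∀ u : ℝ → ℝ, IntegrableOn u (Set.Icc 0 1) →
      ∀ useq : ℕ → ℝ → ℝ, (∀ k, IntegrableOn (useq k) (Set.Icc 0 1)) →
        Tendsto (fun k => L1dist (useq k) u) atTop (nhds 0) →
        Potts γ f u ≤ liminf (fun k => PottsIn γ f (X k) (useq k)) atTop) ∧
    -- … and existence of recovery sequences
    (∀ u : ℝ → ℝ, IntegrableOn u (Set.Icc 0 1) →
      ∃ useq : ℕ → ℝ → ℝ, (∀ k, IntegrableOn (useq k) (Set.Icc 0 1)) ∧
        Tendsto (fun k => L1dist (useq k) u) atTop (nhds 0) ∧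
        limsup (fun k => PottsIn γ f (X k) (useq k)) atTop ≤ Potts γ f u) ∧
    -- (b) each semi-discrete functional has a minimizer
    (∀ k, ∃ u : ℝ → ℝ, ∀ v : ℝ → ℝ, PottsIn γ f (X k) u ≤ PottsIn γ f (X k) v) ∧
    -- (c) sequences of minimizers have accumulation points, and each accumulation point
    -- minimizes the continuous Potts functional
    (∀ useq : ℕ → ℝ → ℝ,
      (∀ k, ∀ v : ℝ → ℝ, PottsIn γ f (X k) (useq k) ≤ PottsIn γ f (X k) v) →
      (∃ (u : ℝ → ℝ) (φ : ℕ → ℕ), IntegrableOn u (Set.Icc 0 1) ∧ StrictMono φ ∧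
        Tendsto (fun i => L1dist (useq (φ i)) u) atTop (nhds 0)) ∧
      (∀ (u : ℝ → ℝ) (φ : ℕ → ℕ), IntegrableOn u (Set.Icc 0 1) → StrictMono φ →
        Tendsto (fun i => L1dist (useq (φ i)) u) atTop (nhds 0) →
        Potts γ f u = ⨅ (v : ℝ → ℝ) (_ : IntegrableOn v (Set.Icc 0 1)), Potts γ f v)) := by
  have hrec : ∀ u : ℝ → ℝ, IntegrableOn u (Icc 0 1) → _ := fun u hu =>
    exists_recovery (u := u) hf hγ hXfin hXnest hXdense hu
  refine ⟨fun u hu v hv hlim => Potts_le_liminf hf hγ X hu hv hlim, hrec,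
    fun k => exists_minimizer hf hγ (hXfin k), fun v hmin =>
    ⟨exists_accumulation_point hγ hf hmin, fun u φ hu hφ hlim => ?_⟩⟩
  refine le_antisymm (le_iInf₂ fun w hw => ?_) (iInf₂_le u hu)
  obtain ⟨r, -, -, hr⟩ := hrec w hw
  have hv : ∀ i, Integrable (v (φ i)) mu01 := fun i =>
    (isPCIn_of_minimizer (hmin (φ i))).isPC.integrable
  calc Potts γ f u
      ≤ liminf (fun i => PottsIn γ f (X (φ i)) (v (φ i))) atTop :=
        Potts_le_liminf hf hγ (fun i => X (φ i)) hu hv hlim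
    _ ≤ liminf (fun i => PottsIn γ f (X (φ i)) (r (φ i))) atTop :=
        liminf_le_liminf (Eventually.of_forall fun i => hmin (φ i) (r (φ i)))
    _ ≤ limsup (fun i => PottsIn γ f (X (φ i)) (r (φ i))) atTop := liminf_le_limsup
    _ ≤ limsup (fun k => PottsIn γ f (X k) (r k)) atTop := by
        have h := limsup_le_limsup_of_le hφ.tendsto_atTop
          (u := fun k => PottsIn γ f (X k) (r k)) (by isBoundedDefault) (by isBoundedDefault)
        rwa [← limsup_comp] at h
    _ ≤ Potts γ f w := hr
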